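/- arXiv:1612.01951 — 2 statements merged into one kernel-verified Lean document; each statement's English description precedes it below -/
import Mathlib

section
/- Let r ∈ ℝ and F, K, T ∈ ℝ with F > 0, K > 0, T > 0, and let f be the complex Black-Scholes call price. Then along the real axis, f(σ) tends to e^{−rT}·F as σ → +∞, and f(σ) tends to −e^{−rT}·K as σ → −∞. -/
/-!
On the real axis the substitution `u = t * x` turns `Phi x` into
`1/2 + (2π)^{-1/2} ∫_0^x exp (-u²/2) du` (`Phi_ofReal`). The half-line Gaussian integral equals
`√(2π)/2`, so `Phi x → 1` as `x → +∞` (`tendsto_Phi_atTop`), and the reflection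
`Phi (-z) = 1 - Phi z` (`Phi_neg`) gives `Phi x → 0` as `x → -∞` (`tendsto_Phi_atBot`).

The term `log (F/K) / (σ √T)` vanishes as `σ → ±∞`, so `d₊(σ)` behaves like `σ √T / 2` and `d₋(σ)`
like `-σ √T / 2`: as `σ → +∞` only the summand `F * Phi (d₊)` survives, and as `σ → -∞` only
`-K * Phi (d₋)`.
-/

open Complex intervalIntegral

/-- The analytic extension of the standard normal CDF to the complex plane:
`Φ(z) = 1/2 + (2π)^{-1/2} ∫_{t=0}^{1} z · exp(−(t·z)²/2) dt`. -/
noncomputable def Phi (z : ℂ) : ℂ :=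
  1 / 2 + ((Real.sqrt (2 * Real.pi))⁻¹ : ℂ) *
    ∫ t in (0:ℝ)..1, z * Complex.exp (-((t : ℂ) * z) ^ 2 / 2)


/-- `d₊(σ) = log(F/K)/(σ√T) + σ√T/2`. -/
noncomputable def dPlus (F K T : ℝ) (σ : ℂ) : ℂ :=
  (Real.log (F / K) : ℂ) / (σ * (Real.sqrt T : ℂ)) + σ * (Real.sqrt T : ℂ) / 2

/-- `d₋(σ) = log(F/K)/(σ√T) − σ√T/2`. -/
noncomputable def dMinus (F K T : ℝ) (σ : ℂ) : ℂ :=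
  (Real.log (F / K) : ℂ) / (σ * (Real.sqrt T : ℂ)) - σ * (Real.sqrt T : ℂ) / 2

/-- The complex Black-Scholes call price
`f(σ) = e^{−rT}·(F·Φ(d₊(σ)) − K·Φ(d₋(σ)))`. -/
noncomputable def BS (r F K T : ℝ) (σ : ℂ) : ℂ :=
  (Real.exp (-(r * T)) : ℂ) * ((F : ℂ) * Phi (dPlus F K T σ) - (K : ℂ) * Phi (dMinus F K T σ))

/-- On the real axis `Phi` is given by the usual Gaussian integral from `0` to `x`. -/
lemma Phi_ofReal (x : ℝ) :
    Phi (x : ℂ) =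
      ((1 / 2 + (Real.sqrt (2 * Real.pi))⁻¹ * ∫ u in (0:ℝ)..x, Real.exp (-(1 / 2) * u ^ 2) : ℝ) :
        ℂ) := by
  have h := mul_integral_comp_mul_left (a := 0) (b := 1)
    (f := fun u : ℝ => Real.exp (-(1 / 2) * u ^ 2)) x
  rw [mul_zero, mul_one] at h
  rw [Phi, ← h, intervalIntegral.integral_const_mul]
  push_cast
  rw [← intervalIntegral.integral_ofReal]
  congr 4
  ext t
  push_cast
  congr 1
  ring

lemma Phi_neg (z : ℂ) : Phi (-z) = 1 - Phi z := by
  simp only [Phi, mul_neg, neg_sq, neg_mul, intervalIntegral.integral_neg]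
  ring

open Filter Topology in
lemma tendsto_Phi_atTop : Tendsto (fun x : ℝ => Phi (x : ℂ)) atTop (𝓝 1) := by
  have hint := MeasureTheory.intervalIntegral_tendsto_integral_Ioi (0 : ℝ)
    (integrable_exp_neg_mul_sq (b := 1 / 2) (by norm_num)).integrableOn
    (tendsto_id (α := ℝ) (x := atTop))
  rw [integral_gaussian_Ioi] at hint
  have h := (hint.const_mul (Real.sqrt (2 * Real.pi))⁻¹).const_add (1 / 2)
  have hval : 1 / 2 + (Real.sqrt (2 * Real.pi))⁻¹ * (Real.sqrt (Real.pi / (1 / 2)) / 2) = 1 := by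
    have hpos : 0 < Real.sqrt (2 * Real.pi) := by positivity
    rw [show Real.pi / (1 / 2) = 2 * Real.pi by ring]
    field_simp
    norm_num
  rw [hval] at h
  simpa only [Phi_ofReal, id, ofReal_one, Function.comp_def] using
    (continuous_ofReal.tendsto (1 : ℝ)).comp h

open Filter Topology in
lemma tendsto_Phi_atBot : Tendsto (fun x : ℝ => Phi (x : ℂ)) atBot (𝓝 0) := by
  have h := (tendsto_Phi_atTop.comp tendsto_neg_atBot_atTop).const_sub 1
  simpa [Function.comp_def, Phi_neg] using h

open Filter Topology in
/-- The first term of `d₊` and `d₋` vanishes as `σ → ±∞`, so it does not affect the divergence of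
the linear term. -/
lemma tendsto_div_mul_zero (c : ℝ) {s : ℝ} (hs : 0 < s) :
    Tendsto (fun σ : ℝ => c / (σ * s)) atTop (𝓝 0) ∧
      Tendsto (fun σ : ℝ => c / (σ * s)) atBot (𝓝 0) :=
  ⟨tendsto_const_nhds.div_atTop (tendsto_id.atTop_mul_const hs),
    tendsto_const_nhds.div_atBot (tendsto_id.atBot_mul_const hs)⟩

open Filter in
/-- along the real axis, `f(σ) → e^{−rT}·F` as `σ → +∞`
and `f(σ) → −e^{−rT}·K` as `σ → −∞`. -/
theorem BS_limits_at_real_infinity (r F K T : ℝ) (hF : 0 < F) (hK : 0 < K) (hT : 0 < T) :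
    Tendsto (fun σ : ℝ => BS r F K T (σ : ℂ)) atTop
      (nhds ((Real.exp (-(r * T)) * F : ℝ) : ℂ)) ∧
    Tendsto (fun σ : ℝ => BS r F K T (σ : ℂ)) atBot
      (nhds (-((Real.exp (-(r * T)) * K : ℝ) : ℂ))) := by
  have hs : 0 < Real.sqrt T := Real.sqrt_pos.mpr hT
  obtain ⟨h0t, h0b⟩ := tendsto_div_mul_zero (Real.log (F / K)) hs
  have hlt : Tendsto (fun σ : ℝ => σ * Real.sqrt T / 2) atTop atTop :=
    (tendsto_id.atTop_mul_const hs).atTop_div_const two_pos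
  have hlb : Tendsto (fun σ : ℝ => σ * Real.sqrt T / 2) atBot atBot :=
    (tendsto_id.atBot_mul_const hs).atBot_div_const two_pos
  have hp (σ : ℝ) : dPlus F K T σ =
      ((Real.log (F / K) / (σ * Real.sqrt T) + σ * Real.sqrt T / 2 : ℝ) : ℂ) := by
    simp only [dPlus]; push_cast; rfl
  have hm (σ : ℝ) : dMinus F K T σ =
      ((Real.log (F / K) / (σ * Real.sqrt T) + -(σ * Real.sqrt T / 2) : ℝ) : ℂ) := by
    simp only [dMinus, sub_eq_add_neg]; push_cast; rfl
  simp only [BS, hp, hm]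
  constructor
  · have h1 := tendsto_Phi_atTop.comp (h0t.add_atTop hlt)
    have h2 := tendsto_Phi_atBot.comp (h0t.add_atBot (tendsto_neg_atTop_atBot.comp hlt))
    have h := ((h1.const_mul (F : ℂ)).sub (h2.const_mul (K : ℂ))).const_mul
      (Real.exp (-(r * T)) : ℂ)
    rw [mul_one, mul_zero, sub_zero, ← ofReal_mul] at h
    exact h
  · have h1 := tendsto_Phi_atBot.comp (h0b.add_atBot hlb)
    have h2 := tendsto_Phi_atTop.comp (h0b.add_atTop (tendsto_neg_atBot_atTop.comp hlb))
    have h := ((h1.const_mul (F : ℂ)).sub (h2.const_mul (K : ℂ))).const_mul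
      (Real.exp (-(r * T)) : ℂ)
    rw [mul_one, mul_zero, zero_sub, mul_neg, ← ofReal_mul] at h
    exact h
end

section
/- Let a ∈ ℝ and define h : ℂ \ {0} → ℂ by h(ŝ) = e^{a/2}·Φ(a/ŝ + ŝ/2) − e^{−a/2}·Φ(a/ŝ − ŝ/2). Then for every ŝ ∈ ℂ with ŝ ≠ 0, h has complex derivative (2π)^{-1/2}·exp(−a²/(2ŝ²) − ŝ²/8) at ŝ; i.e. HasDerivAt h ((2π)^{-1/2}·exp(−a²/(2ŝ²) − ŝ²/8)) ŝ. -/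
/-!
Being entire, `exp (-z² / 2)` has a primitive `G` on `ℂ`. By the fundamental theorem of calculus
along the segment from `0` to `z`, the integral defining `Phi z` is `G z - G 0`, so `Phi` has
derivative `(2π)^{-1/2} exp (-z² / 2)`. In the chain rule for `Hfun`, the identities
`±a/2 - (a/s ± s/2)² / 2 = -a² / (2s²) - s² / 8` give both terms the same exponential factor, and
the inner derivatives `-a/s² ± 1/2` differ by `1`.
-/

open Complex intervalIntegral

/-- The normalized Black-Scholes function
`h(ŝ) = e^{a/2}·Φ(a/ŝ + ŝ/2) − e^{−a/2}·Φ(a/ŝ − ŝ/2)` for log-moneyness `a`. -/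
noncomputable def Hfun (a : ℝ) (s : ℂ) : ℂ :=
  (Real.exp (a / 2) : ℂ) * Phi ((a : ℂ) / s + s / 2)
    - (Real.exp (-a / 2) : ℂ) * Phi ((a : ℂ) / s - s / 2)

lemma Phi_hasDerivAt (z : ℂ) :
    HasDerivAt Phi (((Real.sqrt (2 * Real.pi))⁻¹ : ℂ) * Complex.exp (-z ^ 2 / 2)) z := by
  have hd : Differentiable ℂ (fun w : ℂ => Complex.exp (-w ^ 2 / 2)) := by fun_prop
  obtain ⟨G, hG⟩ := hd.isExactOn_univ
  have hint (w : ℂ) :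
      (∫ t in (0:ℝ)..1, w * Complex.exp (-((t : ℂ) * w) ^ 2 / 2)) = G w - G 0 := by
    have hder (t : ℝ) : HasDerivAt (fun t : ℝ => G ((t : ℂ) * w))
        (w * Complex.exp (-((t : ℂ) * w) ^ 2 / 2)) t := by
      have h1 : HasDerivAt (fun t : ℂ => t * w) w (t : ℂ) := by
        simpa using (hasDerivAt_id (t : ℂ)).mul_const w
      have h2 := ((hG ((t : ℂ) * w) (Set.mem_univ _)).comp (t : ℂ) h1).comp_ofReal
      rw [mul_comm w]
      exact h2
    have hcont : Continuous fun t : ℝ => w * Complex.exp (-((t : ℂ) * w) ^ 2 / 2) := by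
      fun_prop
    have h := integral_eq_sub_of_hasDerivAt (fun t _ => hder t) (hcont.intervalIntegrable 0 1)
    simpa using h
  have hPhi : Phi = fun w =>
      1 / 2 + ((Real.sqrt (2 * Real.pi))⁻¹ : ℂ) * (G w - G 0) := by
    funext w
    rw [Phi, hint]
  rw [hPhi]
  exact (((hG z (Set.mem_univ z)).sub_const (G 0)).const_mul _).const_add _

/-- for every `ŝ ≠ 0`, `h` has complex derivative
`(2π)^{-1/2}·exp(−a²/(2ŝ²) − ŝ²/8)` at `ŝ`. -/
theorem Hfun_hasDerivAt (a : ℝ) :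
    ∀ s : ℂ, s ≠ 0 →
      HasDerivAt (Hfun a)
        (((Real.sqrt (2 * Real.pi))⁻¹ : ℂ) *
          Complex.exp (-(a : ℂ) ^ 2 / (2 * s ^ 2) - s ^ 2 / 8)) s := by
  intro s hs
  have hinv : HasDerivAt (fun w : ℂ => (a : ℂ) / w) (-(a : ℂ) / s ^ 2) s := by
    have h := (hasDerivAt_inv hs).const_mul (a : ℂ)
    simp only [div_eq_mul_inv]
    exact h.congr_deriv (by ring)
  have hhalf : HasDerivAt (fun w : ℂ => w / 2) (1 / 2) s := (hasDerivAt_id s).div_const 2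
  have hu := (Phi_hasDerivAt ((a : ℂ) / s + s / 2)).comp s (hinv.add hhalf)
  have hv := (Phi_hasDerivAt ((a : ℂ) / s - s / 2)).comp s (hinv.sub hhalf)
  have h := (hu.const_mul (Real.exp (a / 2) : ℂ)).sub (hv.const_mul (Real.exp (-a / 2) : ℂ))
  have e1 : (Real.exp (a / 2) : ℂ) * Complex.exp (-((a : ℂ) / s + s / 2) ^ 2 / 2)
      = Complex.exp (-(a : ℂ) ^ 2 / (2 * s ^ 2) - s ^ 2 / 8) := by
    rw [Complex.ofReal_exp, ← Complex.exp_add]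
    congr 1
    push_cast
    field_simp
    ring
  have e2 : (Real.exp (-a / 2) : ℂ) * Complex.exp (-((a : ℂ) / s - s / 2) ^ 2 / 2)
      = Complex.exp (-(a : ℂ) ^ 2 / (2 * s ^ 2) - s ^ 2 / 8) := by
    rw [Complex.ofReal_exp, ← Complex.exp_add]
    congr 1
    push_cast
    field_simp
    ring
  refine HasDerivAt.congr_deriv (f := Hfun a) h ?_
  linear_combination
    ((Real.sqrt (2 * Real.pi))⁻¹ : ℂ) * (-(a : ℂ) / s ^ 2 + 1 / 2) * e1
      - ((Real.sqrt (2 * Real.pi))⁻¹ : ℂ) * (-(a : ℂ) / s ^ 2 - 1 / 2) * e2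
end
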